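/- (Transfer principle.) Let (L, I) be an integral system on a set X and (M, J) an integral system on a set Y, let ρ : X → [0,∞) be a function and φ : X → Y a map such that for every g ∈ M the function x ↦ ρ(x)·g(φ(x)) belongs to L and I(ρ·(g∘φ)) = J(g). Then for every J-integrable function g ∈ M¹, the function x ↦ ρ(x)·g(φ(x)) is I-integrable and I¹(ρ·(g∘φ)) = J¹(g). -/

import Mathlib

open Filter Topology

/-- An integral system on a set `X`: a linear lattice `L` of real-valued functions on `X`
(a vector subspace of `ℝ^X` closed under pointwise max and min) together with a
preintegral `I` on it (a positive linear functional that is continuous in the sense that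
`I fₙ → 0` whenever `fₙ ∈ L` are nonnegative and decrease pointwise to `0`). -/
structure IntegralSystem (X : Type*) where
  L : Set (X → ℝ)
  I : (X → ℝ) → ℝ
  zero_mem : (0 : X → ℝ) ∈ L
  add_mem : ∀ ⦃f g : X → ℝ⦄, f ∈ L → g ∈ L → f + g ∈ L
  smul_mem : ∀ (c : ℝ) ⦃f : X → ℝ⦄, f ∈ L → c • f ∈ L
  sup_mem : ∀ ⦃f g : X → ℝ⦄, f ∈ L → g ∈ L → f ⊔ g ∈ L
  inf_mem : ∀ ⦃f g : X → ℝ⦄, f ∈ L → g ∈ L → f ⊓ g ∈ L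
  I_add : ∀ ⦃f g : X → ℝ⦄, f ∈ L → g ∈ L → I (f + g) = I f + I g
  I_smul : ∀ (c : ℝ) ⦃f : X → ℝ⦄, f ∈ L → I (c • f) = c * I f
  I_pos : ∀ ⦃f : X → ℝ⦄, f ∈ L → (∀ x, 0 ≤ f x) → 0 ≤ I f
  I_cont : ∀ f : ℕ → X → ℝ, (∀ n, f n ∈ L) → (∀ n x, 0 ≤ f n x) →
    (∀ n x, f (n + 1) x ≤ f n x) →
    (∀ x, Tendsto (fun n => f n x) atTop (𝓝 0)) →
    Tendsto (fun n => I (f n)) atTop (𝓝 0)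

variable {X : Type*}

/-- `f : X → (−∞,∞]` belongs to `L_↑` iff some sequence in `L` increases pointwise to `f`. -/
def MemLup (S : IntegralSystem X) (f : X → EReal) : Prop :=
  ∃ g : ℕ → X → ℝ, (∀ n, g n ∈ S.L) ∧ (∀ n x, g n x ≤ g (n + 1) x) ∧
    ∀ x, Tendsto (fun n => ((g n x : EReal))) atTop (𝓝 (f x))

/-- For `f ∈ L_↑`, `I_↑ f = lim I (g n)` for any sequence `(g n)` in `L` increasing
pointwise to `f`; the value does not depend on the chosen sequence, so we may define it as
the supremum of all such limits. -/
noncomputable def Iup (S : IntegralSystem X) (f : X → EReal) : EReal :=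
  sSup { c : EReal | ∃ g : ℕ → X → ℝ, (∀ n, g n ∈ S.L) ∧ (∀ n x, g n x ≤ g (n + 1) x) ∧
    (∀ x, Tendsto (fun n => ((g n x : EReal))) atTop (𝓝 (f x))) ∧
    Tendsto (fun n => ((S.I (g n) : EReal))) atTop (𝓝 c) }

/-- `L_↓ = −L_↑`. -/
def MemLdown (S : IntegralSystem X) (f : X → EReal) : Prop :=
  MemLup S (fun x => -(f x))

/-- `I_↓ f = −I_↑(−f)`. -/
noncomputable def Idown (S : IntegralSystem X) (f : X → EReal) : EReal :=
  -(Iup S (fun x => -(f x)))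

/-- The upper integral `Ī f = inf { I_↑ g : g ∈ L_↑, f ≤ g }` (with `inf ∅ = ∞`). -/
noncomputable def upperInt (S : IntegralSystem X) (f : X → EReal) : EReal :=
  sInf (Iup S '' { g | MemLup S g ∧ ∀ x, f x ≤ g x })

/-- The lower integral `I̲ f = sup { I_↓ g : g ∈ L_↓, g ≤ f }` (with `sup ∅ = −∞`). -/
noncomputable def lowerInt (S : IntegralSystem X) (f : X → EReal) : EReal :=
  sSup (Idown S '' { g | MemLdown S g ∧ ∀ x, g x ≤ f x })

/-- `f : X → ℝ` is `I`-integrable iff its lower and upper integrals coincide and are finite. -/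
def Integrable1 (S : IntegralSystem X) (f : X → ℝ) : Prop :=
  ∃ c : ℝ, lowerInt S (fun x => ((f x : EReal))) = (c : EReal) ∧
    upperInt S (fun x => ((f x : EReal))) = (c : EReal)

/-- The Daniell extension `I¹` of `I`: the common value of the lower and upper integrals of
an integrable function. -/
noncomputable def Int1 (S : IntegralSystem X) (f : X → ℝ) : ℝ :=
  (upperInt S (fun x => ((f x : EReal)))).toReal

/-!
Everything rests on the independence of `I_↑ f` from the approximating sequence: if `w ∈ L` lies
below the limit of an increasing sequence `(uₙ)` in `L`, then `w ⊓ uₙ` increases to `w`, so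
continuity of `I` along monotone sequences gives `I w = lim I (w ⊓ uₙ) ≤ lim I uₙ`. Additivity
of `I_↑` then yields `I_↓ ≤ I_↑`, hence `I̲ ≤ Ī`.

Since `ρ ≥ 0`, the map `G ↦ ρ·(G ∘ φ)` carries increasing sequences in `M` to increasing sequences
in `L` with the same integrals, so it preserves `J_↑` and `J_↓`. It therefore sends every upper
(lower) competitor for `g` to one for `ρ·(g ∘ φ)` of the same integral, and
`J̲ g ≤ I̲ (ρ·(g ∘ φ)) ≤ Ī (ρ·(g ∘ φ)) ≤ J̄ g`.
-/

namespace IntegralSystem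

section Preintegral

variable {S : IntegralSystem X} {f g : X → ℝ}

theorem sub_mem (hf : f ∈ S.L) (hg : g ∈ S.L) : f - g ∈ S.L := by
  simpa [sub_eq_add_neg] using S.add_mem hf (S.smul_mem (-1) hg)

theorem I_sub (hf : f ∈ S.L) (hg : g ∈ S.L) : S.I (f - g) = S.I f - S.I g := by
  rw [sub_eq_add_neg, ← neg_one_smul ℝ g, S.I_add hf (S.smul_mem (-1) hg), S.I_smul (-1) hg]
  ring

theorem I_zero (S : IntegralSystem X) : S.I 0 = 0 := by
  simpa using I_sub S.zero_mem S.zero_mem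

theorem I_mono (hf : f ∈ S.L) (hg : g ∈ S.L) (hfg : f ≤ g) : S.I f ≤ S.I g := by
  rw [← sub_nonneg, ← I_sub hg hf]
  exact S.I_pos (sub_mem hg hf) fun x => sub_nonneg.2 (hfg x)

end Preintegral

/-- `S.IncreasesTo u f`: the sequence `u` in `S.L` increases pointwise to the extended-real
function `f`, that is, `u` witnesses `f ∈ L_↑`. -/
structure IncreasesTo (S : IntegralSystem X) (u : ℕ → X → ℝ) (f : X → EReal) : Prop where
  mem : ∀ n, u n ∈ S.L
  mono : Monotone u
  tendsto : ∀ x, Tendsto (fun n => (u n x : EReal)) atTop (𝓝 (f x))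

theorem increasesTo_iff {S : IntegralSystem X} {u : ℕ → X → ℝ} {f : X → EReal} :
    S.IncreasesTo u f ↔ (∀ n, u n ∈ S.L) ∧ (∀ n x, u n x ≤ u (n + 1) x) ∧
      ∀ x, Tendsto (fun n => (u n x : EReal)) atTop (𝓝 (f x)) :=
  ⟨fun h => ⟨h.mem, fun n => h.mono n.le_succ, h.tendsto⟩,
    fun ⟨hmem, hstep, hlim⟩ => ⟨hmem, monotone_nat_of_le_succ hstep, hlim⟩⟩

end IntegralSystem

theorem memLup_iff {S : IntegralSystem X} {f : X → EReal} :
    MemLup S f ↔ ∃ u, S.IncreasesTo u f := by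
  simp only [IntegralSystem.increasesTo_iff, MemLup]

namespace IntegralSystem.IncreasesTo

variable {S : IntegralSystem X} {u v : ℕ → X → ℝ} {f g : X → EReal} {w : X → ℝ}

theorem le (hu : S.IncreasesTo u f) (n : ℕ) (x : X) : (u n x : EReal) ≤ f x :=
  Monotone.ge_of_tendsto (fun _ _ hmn => EReal.coe_le_coe_iff.2 (hu.mono hmn x)) (hu.tendsto x) n

theorem ne_bot (hu : S.IncreasesTo u f) (x : X) : f x ≠ ⊥ :=
  ((EReal.bot_lt_coe _).trans_le (hu.le 0 x)).ne'

theorem add (hu : S.IncreasesTo u f) (hv : S.IncreasesTo v g) :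
    S.IncreasesTo (u + v) (f + g) where
  mem n := S.add_mem (hu.mem n) (hv.mem n)
  mono := hu.mono.add hv.mono
  tendsto x := by
    have hadd := EReal.continuousAt_add (p := (f x, g x)) (.inr (hv.ne_bot x)) (.inl (hu.ne_bot x))
    exact hadd.tendsto.comp ((hu.tendsto x).prodMk_nhds (hv.tendsto x))

theorem inf_of_le (hu : S.IncreasesTo u f) (hw : w ∈ S.L) (hwf : ∀ x, (w x : EReal) ≤ f x) :
    S.IncreasesTo (fun n => w ⊓ u n) (fun x => w x) where
  mem n := S.inf_mem hw (hu.mem n)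
  mono _ _ hmn := inf_le_inf_left w (hu.mono hmn)
  tendsto x := by
    have hmin := (tendsto_const_nhds (x := (w x : EReal))).min (hu.tendsto x)
    rw [min_eq_left (hwf x)] at hmin
    simpa only [Pi.inf_apply, EReal.coe_strictMono.monotone.map_min] using hmin

theorem tendsto_I_coe (hu : S.IncreasesTo u (fun x => w x)) (hw : w ∈ S.L) :
    Tendsto (fun n => S.I (u n)) atTop (𝓝 (S.I w)) := by
  have hlim : Tendsto (fun n => S.I (w - u n)) atTop (𝓝 0) :=
    S.I_cont _ (fun n => sub_mem hw (hu.mem n))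
      (fun n x => sub_nonneg.2 (EReal.coe_le_coe_iff.1 (hu.le n x)))
      (fun n x => sub_le_sub_left (hu.mono n.le_succ x) _)
      (fun x => by simpa using (EReal.tendsto_coe.1 (hu.tendsto x)).const_sub (w x))
  simpa [I_sub hw (hu.mem _)] using hlim.const_sub (S.I w)

theorem I_le_iSup (hu : S.IncreasesTo u f) (hw : w ∈ S.L) (hwf : ∀ x, (w x : EReal) ≤ f x) :
    (S.I w : EReal) ≤ ⨆ n, (S.I (u n) : EReal) := by
  have hinf := hu.inf_of_le hw hwf
  refine le_of_tendsto' (EReal.tendsto_coe.2 (hinf.tendsto_I_coe hw)) fun n => ?_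
  calc (S.I (w ⊓ u n) : EReal)
      ≤ S.I (u n) := EReal.coe_le_coe_iff.2 (I_mono (hinf.mem n) (hu.mem n) inf_le_right)
    _ ≤ ⨆ n, (S.I (u n) : EReal) := le_iSup (fun n => (S.I (u n) : EReal)) n

theorem tendsto_I_iSup (hu : S.IncreasesTo u f) :
    Tendsto (fun n => (S.I (u n) : EReal)) atTop (𝓝 (⨆ n, (S.I (u n) : EReal))) :=
  tendsto_atTop_iSup fun m n hmn =>
    EReal.coe_le_coe_iff.2 (I_mono (hu.mem m) (hu.mem n) (hu.mono hmn))

theorem Iup_eq_iSup (hu : S.IncreasesTo u f) : Iup S f = ⨆ n, (S.I (u n) : EReal) := by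
  apply le_antisymm
  · refine sSup_le ?_
    rintro c ⟨v, hmem, hstep, hlim, hc⟩
    have hv : S.IncreasesTo v f := increasesTo_iff.2 ⟨hmem, hstep, hlim⟩
    exact le_of_tendsto' hc fun n => hu.I_le_iSup (hv.mem n) (hv.le n)
  · obtain ⟨hmem, hstep, hlim⟩ := increasesTo_iff.1 hu
    exact le_sSup ⟨u, hmem, hstep, hlim, hu.tendsto_I_iSup⟩

theorem tendsto_I (hu : S.IncreasesTo u f) :
    Tendsto (fun n => (S.I (u n) : EReal)) atTop (𝓝 (Iup S f)) :=
  hu.Iup_eq_iSup ▸ hu.tendsto_I_iSup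

end IntegralSystem.IncreasesTo

section UpperLower

variable {S : IntegralSystem X} {f g : X → EReal} {w : X → ℝ}

theorem MemLup.ne_bot (hf : MemLup S f) (x : X) : f x ≠ ⊥ :=
  let ⟨_, hu⟩ := memLup_iff.1 hf
  hu.ne_bot x

theorem MemLup.add (hf : MemLup S f) (hg : MemLup S g) : MemLup S (f + g) :=
  let ⟨_, hu⟩ := memLup_iff.1 hf
  let ⟨_, hv⟩ := memLup_iff.1 hg
  memLup_iff.2 ⟨_, hu.add hv⟩

theorem MemLup.I_le_Iup (hf : MemLup S f) (hw : w ∈ S.L) (hwf : ∀ x, (w x : EReal) ≤ f x) :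
    (S.I w : EReal) ≤ Iup S f := by
  obtain ⟨u, hu⟩ := memLup_iff.1 hf
  exact hu.Iup_eq_iSup ▸ hu.I_le_iSup hw hwf

theorem MemLup.Iup_nonneg (hf : MemLup S f) (h0 : 0 ≤ f) : 0 ≤ Iup S f := by
  simpa only [S.I_zero, EReal.coe_zero] using hf.I_le_Iup S.zero_mem h0

theorem MemLup.Iup_ne_bot (hf : MemLup S f) : Iup S f ≠ ⊥ := by
  obtain ⟨u, hu⟩ := memLup_iff.1 hf
  exact ((EReal.bot_lt_coe _).trans_le (hf.I_le_Iup (hu.mem 0) (hu.le 0))).ne'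

theorem MemLup.Iup_add (hf : MemLup S f) (hg : MemLup S g) :
    Iup S (f + g) = Iup S f + Iup S g := by
  obtain ⟨u, hu⟩ := memLup_iff.1 hf
  obtain ⟨v, hv⟩ := memLup_iff.1 hg
  have hadd := EReal.continuousAt_add (p := (Iup S f, Iup S g))
    (.inr hg.Iup_ne_bot) (.inl hf.Iup_ne_bot)
  have hlim := hadd.tendsto.comp (hu.tendsto_I.prodMk_nhds hv.tendsto_I)
  refine tendsto_nhds_unique (hu.add hv).tendsto_I (hlim.congr fun n => ?_)
  simp [S.I_add (hu.mem n) (hv.mem n)]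

theorem Idown_le_Iup (hf : MemLdown S f) (hg : MemLup S g) (hfg : f ≤ g) :
    Idown S f ≤ Iup S g := by
  have hne_top : ∀ x, f x ≠ ⊤ := fun x hx => hf.ne_bot x (by simp [hx])
  have hdiff : 0 ≤ g + fun x => -f x := fun x =>
    (EReal.sub_nonneg (.inr (hne_top x)) (.inl (hg.ne_bot x))).2 (hfg x)
  have hsum : 0 ≤ Iup S g + Iup S (fun x => -f x) :=
    hg.Iup_add hf ▸ (hg.add hf).Iup_nonneg hdiff
  rw [Idown, ← zero_sub]
  exact (EReal.sub_le_iff_le_add (.inl hf.Iup_ne_bot) (.inr hg.Iup_ne_bot)).2 hsum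

theorem lowerInt_le_upperInt (S : IntegralSystem X) (f : X → EReal) :
    lowerInt S f ≤ upperInt S f := by
  refine sSup_le ?_
  rintro _ ⟨g, ⟨hg, hgf⟩, rfl⟩
  refine le_sInf ?_
  rintro _ ⟨h, ⟨hh, hfh⟩, rfl⟩
  exact Idown_le_Iup hg hh fun x => (hgf x).trans (hfh x)

end UpperLower

section Transfer

variable {Y : Type*} {S : IntegralSystem X} {T : IntegralSystem Y} {ρ : X → ℝ} {φ : X → Y}
  {u : ℕ → Y → ℝ} {G : Y → EReal}

theorem IntegralSystem.IncreasesTo.weighted_comp (hρ : ∀ x, 0 ≤ ρ x)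
    (hmem : ∀ g ∈ T.L, (fun x => ρ x * g (φ x)) ∈ S.L) (hu : T.IncreasesTo u G) :
    S.IncreasesTo (fun n x => ρ x * u n (φ x)) (fun x => ρ x * G (φ x)) where
  mem n := hmem _ (hu.mem n)
  mono _ _ hmn x := mul_le_mul_of_nonneg_left (hu.mono hmn (φ x)) (hρ x)
  tendsto x := by
    simp only [EReal.coe_mul]
    exact EReal.Tendsto.const_mul (hu.tendsto (φ x)) (.inl (EReal.coe_ne_bot _))
      (.inl (EReal.coe_ne_top _))

theorem MemLup.weighted_comp (hρ : ∀ x, 0 ≤ ρ x)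
    (hmem : ∀ g ∈ T.L, (fun x => ρ x * g (φ x)) ∈ S.L) (hG : MemLup T G) :
    MemLup S (fun x => ρ x * G (φ x)) :=
  let ⟨_, hu⟩ := memLup_iff.1 hG
  memLup_iff.2 ⟨_, hu.weighted_comp hρ hmem⟩

theorem MemLdown.weighted_comp (hρ : ∀ x, 0 ≤ ρ x)
    (hmem : ∀ g ∈ T.L, (fun x => ρ x * g (φ x)) ∈ S.L) (hG : MemLdown T G) :
    MemLdown S (fun x => ρ x * G (φ x)) := by
  simpa only [MemLdown, mul_neg] using MemLup.weighted_comp hρ hmem hG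

theorem MemLup.Iup_weighted_comp (hρ : ∀ x, 0 ≤ ρ x)
    (hmem : ∀ g ∈ T.L, (fun x => ρ x * g (φ x)) ∈ S.L)
    (hI : ∀ g ∈ T.L, S.I (fun x => ρ x * g (φ x)) = T.I g) (hG : MemLup T G) :
    Iup S (fun x => ρ x * G (φ x)) = Iup T G := by
  obtain ⟨u, hu⟩ := memLup_iff.1 hG
  simp only [(hu.weighted_comp hρ hmem).Iup_eq_iSup, hu.Iup_eq_iSup, hI _ (hu.mem _)]

theorem MemLdown.Idown_weighted_comp (hρ : ∀ x, 0 ≤ ρ x)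
    (hmem : ∀ g ∈ T.L, (fun x => ρ x * g (φ x)) ∈ S.L)
    (hI : ∀ g ∈ T.L, S.I (fun x => ρ x * g (φ x)) = T.I g) (hG : MemLdown T G) :
    Idown S (fun x => ρ x * G (φ x)) = Idown T G := by
  simpa only [Idown, mul_neg] using congrArg (-·) (MemLup.Iup_weighted_comp hρ hmem hI hG)

theorem upperInt_weighted_comp_le (hρ : ∀ x, 0 ≤ ρ x)
    (hmem : ∀ g ∈ T.L, (fun x => ρ x * g (φ x)) ∈ S.L)
    (hI : ∀ g ∈ T.L, S.I (fun x => ρ x * g (φ x)) = T.I g) (f : Y → EReal) :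
    upperInt S (fun x => ρ x * f (φ x)) ≤ upperInt T f := by
  refine le_sInf ?_
  rintro _ ⟨G, ⟨hG, hfG⟩, rfl⟩
  exact sInf_le ⟨_, ⟨hG.weighted_comp hρ hmem, fun x =>
    mul_le_mul_of_nonneg_left (hfG (φ x)) (EReal.coe_nonneg.2 (hρ x))⟩,
    hG.Iup_weighted_comp hρ hmem hI⟩

theorem lowerInt_le_lowerInt_weighted_comp (hρ : ∀ x, 0 ≤ ρ x)
    (hmem : ∀ g ∈ T.L, (fun x => ρ x * g (φ x)) ∈ S.L)
    (hI : ∀ g ∈ T.L, S.I (fun x => ρ x * g (φ x)) = T.I g) (f : Y → EReal) :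
    lowerInt T f ≤ lowerInt S (fun x => ρ x * f (φ x)) := by
  refine sSup_le ?_
  rintro _ ⟨G, ⟨hG, hGf⟩, rfl⟩
  exact le_sSup ⟨_, ⟨hG.weighted_comp hρ hmem, fun x =>
    mul_le_mul_of_nonneg_left (hGf (φ x)) (EReal.coe_nonneg.2 (hρ x))⟩,
    hG.Idown_weighted_comp hρ hmem hI⟩

end Transfer

/-- Transfer principle: if `ρ : X → [0,∞)` and `φ : X → Y` satisfy
`ρ·(g ∘ φ) ∈ L` and `I (ρ·(g ∘ φ)) = J g` for all `g ∈ M`, then the same holds for the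
Daniell extensions: `ρ·(g ∘ φ)` is `I`-integrable and `I¹ (ρ·(g ∘ φ)) = J¹ g` for every
`J`-integrable `g`. -/
theorem transfer_principle {Y : Type*} (S : IntegralSystem X) (T : IntegralSystem Y)
    (ρ : X → ℝ) (hρ : ∀ x, 0 ≤ ρ x) (φ : X → Y)
    (h1 : ∀ g ∈ T.L, (fun x => ρ x * g (φ x)) ∈ S.L)
    (h2 : ∀ g ∈ T.L, S.I (fun x => ρ x * g (φ x)) = T.I g) :
    ∀ g : Y → ℝ, Integrable1 T g →
      Integrable1 S (fun x => ρ x * g (φ x)) ∧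
      Int1 S (fun x => ρ x * g (φ x)) = Int1 T g := by
  rintro g ⟨c, hlower, hupper⟩
  set F : X → EReal := fun x => ((ρ x * g (φ x) : ℝ) : EReal) with hF
  have upper_le : upperInt S F ≤ c := by
    simpa only [hF, EReal.coe_mul, hupper] using
      upperInt_weighted_comp_le hρ h1 h2 fun y => (g y : EReal)
  have le_lower : c ≤ lowerInt S F := by
    simpa only [hF, EReal.coe_mul, hlower] using
      lowerInt_le_lowerInt_weighted_comp hρ h1 h2 fun y => (g y : EReal)
  have lower_le_upper : lowerInt S F ≤ upperInt S F := lowerInt_le_upperInt S F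
  have lower_eq : lowerInt S F = c := le_antisymm (lower_le_upper.trans upper_le) le_lower
  have upper_eq : upperInt S F = c := le_antisymm upper_le (le_lower.trans lower_le_upper)
  exact ⟨⟨c, lower_eq, upper_eq⟩, by rw [Int1, Int1, upper_eq, hupper]⟩
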